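/- Let G = (V, E) be a finite simple undirected graph and let x : E → {0, 1}. Suppose that (i) for every triangle of G, i.e., for all pairwise distinct i, j, k ∈ V with (i, j), (j, k), (i, k) ∈ E, the triangle inequalities x_{ij} + x_{jk} − x_{ik} ≤ 1, x_{ij} − x_{jk} + x_{ik} ≤ 1 and −x_{ij} + x_{jk} + x_{ik} ≤ 1 hold; and (ii) for all pairwise distinct i, j, k ∈ V with (i, k), (j, k) ∈ E and (i, j) ∉ E, x_{ik} + x_{jk} ≤ 1 holds. Then the relation on V defined by i ∼ j ⟺ (i = j or ((i, j) ∈ E and x_{ij} = 1)) is an equivalence relation, and every equivalence class of ∼ is a clique of G all of whose internal edges e satisfy x_e = 1. Consequently, the integral feasible solutions of formulation F1s are exactly the clique partitions of G. -/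

import Mathlib

/-!
The edges with `x = 1` form a subgraph `H` of `G`. Two edges of `H` at a common vertex contribute
`2` to the left-hand side of a constraint: the inequality for missing edges then forces their other
endpoints to be adjacent in `G`, and the triangle inequality forces the closing edge into `H`. Hence
`H` has no induced path on three vertices, which makes it a disjoint union of cliques.
-/

section ClusterGraph

variable {V : Type*} {H : SimpleGraph V}

/-- A cluster graph, i.e. a disjoint union of cliques, encoded by the absence of induced paths on
three vertices: distinct neighbours of a common vertex are adjacent. -/
def IsClusterGraph (H : SimpleGraph V) : Prop :=
  ∀ ⦃i j l : V⦄, H.Adj i j → H.Adj i l → j ≠ l → H.Adj j l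

namespace IsClusterGraph

theorem equivalence_eq_or_adj (hH : IsClusterGraph H) :
    Equivalence (fun i j : V => i = j ∨ H.Adj i j) where
  refl _ := Or.inl rfl
  symm := Or.imp Eq.symm SimpleGraph.Adj.symm
  trans := by
    rintro i j k (rfl | hij) (rfl | hjk)
    · exact Or.inl rfl
    · exact Or.inr hjk
    · exact Or.inr hij
    · exact or_iff_not_imp_left.mpr (hH hij.symm hjk)

theorem adj_of_eq_or_adj (hH : IsClusterGraph H) {i j l : V} (hij : i = j ∨ H.Adj i j)
    (hil : i = l ∨ H.Adj i l) (hjl : j ≠ l) : H.Adj j l :=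
  have hequiv := hH.equivalence_eq_or_adj
  (hequiv.trans (hequiv.symm hij) hil).resolve_left hjl

end IsClusterGraph

end ClusterGraph

/-- Integral feasibility for formulation F1s. The edge variables are a function of two vertices that
is constrained only on the edges of `G`. Since `x` is symmetric and `triangle` ranges over all
orderings of a triangle, it comprises all three triangle inequalities. -/
structure IsF1sFeasible {V R : Type*} [AddMonoidWithOne R] [LE R] (G : SimpleGraph V)
    (x : V → V → R) : Prop where
  symm : ∀ ⦃i j : V⦄, G.Adj i j → x i j = x j i
  binary : ∀ ⦃i j : V⦄, G.Adj i j → x i j = 0 ∨ x i j = 1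
  triangle : ∀ ⦃i j k : V⦄, G.Adj i j → G.Adj j k → G.Adj i k → x i j + x i k ≤ 1 + x j k
  missing_edge : ∀ ⦃i j k : V⦄, i ≠ j → G.Adj i k → G.Adj j k → ¬ G.Adj i j → x i k + x j k ≤ 1

namespace IsF1sFeasible

variable {V R : Type*} [AddMonoidWithOne R] {G : SimpleGraph V} {x : V → V → R}

/-- The subgraph of `G` formed by the edges that a feasible solution selects, i.e. those joining
vertices of the same component. -/
def selectedGraph [LE R] (hx : IsF1sFeasible G x) : SimpleGraph V where
  Adj i j := G.Adj i j ∧ x i j = 1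
  symm := ⟨fun _ _ hij => ⟨hij.1.symm, (hx.symm hij.1).symm.trans hij.2⟩⟩
  loopless := ⟨fun _ hi => hi.1.ne rfl⟩

variable [PartialOrder R] [ZeroLEOneClass R] [NeZero (1 : R)] [AddLeftStrictMono R]

theorem adj_of_selectedGraph_adj (hx : IsF1sFeasible G x) {i j l : V}
    (hij : hx.selectedGraph.Adj i j) (hil : hx.selectedGraph.Adj i l) (hjl : j ≠ l) :
    G.Adj j l := by
  by_contra hnadj
  obtain ⟨hji, hxji⟩ := hij.symm
  obtain ⟨hli, hxli⟩ := hil.symm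
  have two_le_one : (2 : R) ≤ 1 := by
    simpa only [hxji, hxli, one_add_one_eq_two] using hx.missing_edge hjl hji hli hnadj
  exact one_lt_two.not_ge two_le_one

theorem eq_one_of_selectedGraph_adj (hx : IsF1sFeasible G x) {i j l : V}
    (hij : hx.selectedGraph.Adj i j) (hil : hx.selectedGraph.Adj i l) (hjl : G.Adj j l) :
    x j l = 1 := by
  refine (hx.binary hjl).resolve_left fun hxjl => ?_
  have two_le_one : (2 : R) ≤ 1 := by
    simpa only [hij.2, hil.2, hxjl, one_add_one_eq_two, add_zero] using
      hx.triangle hij.1 hjl hil.1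
  exact one_lt_two.not_ge two_le_one

theorem isClusterGraph_selectedGraph (hx : IsF1sFeasible G x) :
    IsClusterGraph hx.selectedGraph := fun _ _ _ hij hil hjl =>
  have hadj := hx.adj_of_selectedGraph_adj hij hil hjl
  ⟨hadj, hx.eq_one_of_selectedGraph_adj hij hil hadj⟩

end IsF1sFeasible

theorem F1s_feasible_iff_clique_partition_general {V R : Type*} [AddMonoidWithOne R]
    [PartialOrder R] [ZeroLEOneClass R] [NeZero (1 : R)] [AddLeftStrictMono R]
    {G : SimpleGraph V} {x : V → V → R} (hx : IsF1sFeasible G x) :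
    Equivalence (fun i j : V => i = j ∨ (G.Adj i j ∧ x i j = 1)) ∧
    (∀ i j l : V, (i = j ∨ (G.Adj i j ∧ x i j = 1)) → (i = l ∨ (G.Adj i l ∧ x i l = 1)) →
      j ≠ l → G.Adj j l ∧ x j l = 1) :=
  have hcluster := hx.isClusterGraph_selectedGraph
  ⟨hcluster.equivalence_eq_or_adj, fun _ _ _ => hcluster.adj_of_eq_or_adj⟩

/-- Integral feasible solutions of formulation F1s are exactly the clique partitions:
if a symmetric binary assignment `x` on the edges of `G` satisfies the triangle
inequalities on triangles of `G` and `x i k + x j k ≤ 1` whenever `(i,k), (j,k)` are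
edges but `(i,j)` is not, then `i ∼ j ↔ (i = j ∨ (Adj i j ∧ x i j = 1))` is an
equivalence relation, and each equivalence class is a clique all of whose internal
edges carry `x = 1`. -/
theorem F1s_feasible_iff_clique_partition {V : Type*} [Fintype V] [DecidableEq V]
    (G : SimpleGraph V) [DecidableRel G.Adj]
    (x : V → V → ℕ)
    (hsymm : ∀ i j : V, x i j = x j i)
    (hbin : ∀ i j : V, x i j = 0 ∨ x i j = 1)
    (htri₁ : ∀ i j k : V, i ≠ j → j ≠ k → i ≠ k →
      G.Adj i j → G.Adj j k → G.Adj i k → x i j + x j k ≤ 1 + x i k)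
    (htri₂ : ∀ i j k : V, i ≠ j → j ≠ k → i ≠ k →
      G.Adj i j → G.Adj j k → G.Adj i k → x i j + x i k ≤ 1 + x j k)
    (htri₃ : ∀ i j k : V, i ≠ j → j ≠ k → i ≠ k →
      G.Adj i j → G.Adj j k → G.Adj i k → x j k + x i k ≤ 1 + x i j)
    (hmiss : ∀ i j k : V, i ≠ j → j ≠ k → i ≠ k →
      G.Adj i k → G.Adj j k → ¬ G.Adj i j → x i k + x j k ≤ 1) :
    Equivalence (fun i j : V => i = j ∨ (G.Adj i j ∧ x i j = 1)) ∧
    (∀ i j l : V, (i = j ∨ (G.Adj i j ∧ x i j = 1)) → (i = l ∨ (G.Adj i l ∧ x i l = 1)) →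
      j ≠ l → G.Adj j l ∧ x j l = 1) :=
  F1s_feasible_iff_clique_partition_general
    { symm := fun i j _ => hsymm i j
      binary := fun i j _ => hbin i j
      triangle := fun i j k hij hjk hik => htri₂ i j k hij.ne hjk.ne hik.ne hij hjk hik
      missing_edge := fun i j k hne hik hjk => hmiss i j k hne hjk.ne hik.ne hik hjk }
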